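/- Let p be a prime integer, k ≥ 0 an integer, and let Λ be a finite subgroup of (ℝ/ℤ)^{d+1} which is non-pyramidal and has δ-polynomial 1 + t^{k+1} + t^{2(k+1)} + ⋯ + t^{(p²−1)(k+1)}. Then one of the following holds: (1) d = p²(k+1) − 1 and Λ is the cyclic subgroup generated by (1/p², …, 1/p²); (2) d = (p² + p − 1)(k+1) − 1 and there is a permutation of the coordinates after which Λ is the cyclic subgroup generated by the element whose first (p²−1)(k+1) coordinates all equal 1/p and whose last p(k+1) coordinates all equal 1/p²; (3) d = p(p+1)(k+1) − 1 and there is a permutation of the coordinates after which Λ is generated by the two elements x₁ and x₂, where x₁ has its first p(k+1) coordinates equal to 1/p and its remaining p²(k+1) coordinates equal to 0, and x₂ has its first p(k+1) coordinates equal to 0 and its remaining p²(k+1) coordinates equal to 1/p. -/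

import Mathlib

open scoped BigOperators

local instance : Fact ((0:ℝ) < 1) := ⟨one_pos⟩

noncomputable def fracR (x : AddCircle (1:ℝ)) : ℝ :=
  ((AddCircle.equivIco 1 0) x : ℝ)

noncomputable def ht {ι : Type*} [Fintype ι] (x : ι → AddCircle (1:ℝ)) : ℝ :=
  ∑ i, fracR (x i)

/-- `Λ` has δ-polynomial `1 + t^step + t^(2*step) + ⋯ + t^((v-1)*step)` :
the height map is a bijection from `Λ` onto `{j*step : 0 ≤ j ≤ v-1}`. -/
def HasDeltaPoly {ι : Type*} [Fintype ι] (v step : ℕ)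
    (Λ : Set (ι → AddCircle (1:ℝ))) : Prop :=
  Set.BijOn ht Λ {y : ℝ | ∃ j : ℕ, j < v ∧ y = (j : ℝ) * (step : ℝ)}

def NonPyramidal {ι : Type*} [Fintype ι] (Λ : Set (ι → AddCircle (1:ℝ))) : Prop :=
  ∀ i : ι, ∃ x ∈ Λ, x i ≠ 0

/-!
Heights are subadditive and pairwise distinct on `Λ`, so a family of distinct elements whose heights
are bounded by `0, s, 2s, …` attains these bounds, where `s = k + 1`. Let `x` have height `s` and
order `m`, let `y` have height `m * s`, and let `r` be the order of `y` modulo `x`. The combinations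
`a • x + b • y` with `a < m` and `b < r` are distinct and of height at most `(a + m * b) * s`; hence
these are their heights, and no coordinate of `(m - 1) • x + (r - 1) • y` carries. This forces
`x i ∈ {0, 1/m}`, then `y i = 1/r` off the support of `x`, and on it either `y = 0` throughout or
`y = 1/(m * r)` throughout. The heights of `x` and `y` count the coordinates. When `|Λ| = p * q`
with `p` and `q` prime, either `x` alone generates `Λ` or `m * r = p * q` and `x`, `y` generate it.
-/

open Finset AddSubgroup

section Torsion

variable {G : Type*} [AddCommGroup G] {x y : G}

lemma addOrderOf_mul_addOrderOf_mk_dvd_natCard (x y : G) :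
    addOrderOf x * addOrderOf (y : G ⧸ zmultiples x) ∣ Nat.card G := by
  rw [card_eq_card_quotient_mul_card_addSubgroup (zmultiples x), Nat.card_zmultiples, mul_comm]
  exact mul_dvd_mul_right (addOrderOf_dvd_natCard _) _

lemma closure_pair_eq_top_of_addOrderOf_mul_eq [Finite G]
    (h : addOrderOf x * addOrderOf (y : G ⧸ zmultiples x) = Nat.card G) :
    AddSubgroup.closure {x, y} = ⊤ := by
  have hcard : Nat.card (zmultiples (y : G ⧸ zmultiples x)) = Nat.card (G ⧸ zmultiples x) := by
    rw [card_eq_card_quotient_mul_card_addSubgroup (zmultiples x), Nat.card_zmultiples,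
      mul_comm] at h
    rw [Nat.card_zmultiples]
    exact mul_right_cancel₀ (addOrderOf_pos x).ne' h
  refine (eq_top_iff' _).2 fun z => mem_closure_pair.2 ?_
  obtain ⟨b, hb⟩ := mem_zmultiples_iff.1
    (eq_top_of_card_eq _ hcard ▸ mem_top (z : G ⧸ zmultiples x))
  obtain ⟨a, ha⟩ := mem_zmultiples_iff.1 (QuotientAddGroup.eq.1 hb)
  exact ⟨a, b, by rw [ha]; abel⟩

lemma injOn_mod_nsmul_add_div_nsmul (x y : G) :
    Set.InjOn (fun n : ℕ => (n % addOrderOf x) • x + (n / addOrderOf x) • y)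
      (Set.Iio (addOrderOf x * addOrderOf (y : G ⧸ zmultiples x))) := by
  intro a ha b hb hab
  have hpos : 0 < addOrderOf x := Nat.pos_of_mul_pos_right (Nat.zero_lt_of_lt ha)
  have hdiv : a / addOrderOf x = b / addOrderOf x := by
    refine nsmul_injOn_Iio_addOrderOf (Nat.div_lt_of_lt_mul ha) (Nat.div_lt_of_lt_mul hb) ?_
    simpa [(QuotientAddGroup.eq_zero_iff x).2 (mem_zmultiples x)] using
      congrArg (QuotientAddGroup.mk' (zmultiples x)) hab
  have hmod : a % addOrderOf x = b % addOrderOf x :=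
    nsmul_injOn_Iio_addOrderOf (Nat.mod_lt _ hpos) (Nat.mod_lt _ hpos)
      (by simpa only [hdiv, add_left_inj] using hab)
  rw [← Nat.div_add_mod a (addOrderOf x), hdiv, hmod, Nat.div_add_mod]

lemma exists_zsmul_eq_addOrderOf_mk_nsmul (x y : G) :
    ∃ c : ℤ, c • x = addOrderOf (y : G ⧸ zmultiples x) • y := by
  rw [← mem_zmultiples_iff, ← QuotientAddGroup.eq_zero_iff, QuotientAddGroup.mk_nsmul]
  exact addOrderOf_nsmul_eq_zero _

lemma eq_closure_coe_image_of_closure_eq_top {H : AddSubgroup G} {T : Set H}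
    (h : AddSubgroup.closure T = ⊤) : H = AddSubgroup.closure ((↑) '' T) := by
  rw [← H.coe_subtype, ← AddMonoidHom.map_closure, h, ← AddMonoidHom.range_eq_map, range_subtype]

lemma eq_zmultiples_coe_of_zmultiples_eq_top {H : AddSubgroup G} {x : H}
    (h : zmultiples x = ⊤) : H = zmultiples (x : G) := by
  simp only [zmultiples_eq_closure] at h ⊢
  simpa only [Set.image_singleton] using eq_closure_coe_image_of_closure_eq_top h

lemma zmultiples_eq_top_of_closure_pair_eq_top {n : ℕ} (h : AddSubgroup.closure {x, y} = ⊤)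
    (hxy : n • y = x) : zmultiples y = ⊤ := by
  rw [eq_top_iff, ← h, closure_le]
  rintro z (rfl | rfl)
  · exact hxy ▸ nsmul_mem (mem_zmultiples y) n
  · exact mem_zmultiples z

end Torsion

lemma eq_and_eq_or_eq_and_eq_of_mul_dvd_prime_mul_prime {p q m r : ℕ} (hp : p.Prime)
    (hq : q.Prime) (h : m * r ∣ p * q) (hm : m ≠ 1) (hr : r ≠ 1) :
    (m = p ∧ r = q) ∨ (m = q ∧ r = p) := by
  obtain ⟨a, b, ha, hb, rfl⟩ := Nat.dvd_mul.1 (dvd_of_mul_right_dvd h)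
  rcases (Nat.dvd_prime hp).1 ha with rfl | rfl <;> rcases (Nat.dvd_prime hq).1 hb with rfl | rfl
  · simp at hm
  · rw [one_mul, mul_comm] at h
    have := (Nat.dvd_prime hp).1 (Nat.dvd_of_mul_dvd_mul_right hq.pos h)
    simp_all
  · rw [mul_one] at h
    have := (Nat.dvd_prime hq).1 (Nat.dvd_of_mul_dvd_mul_left hp.pos h)
    simp_all
  · exact absurd (Nat.dvd_one.1 (Nat.dvd_of_mul_dvd_mul_left (mul_pos hp.pos hq.pos)
      (by rwa [mul_one]))) hr

lemma exists_perm_val_lt_card_iff {n : ℕ} (S : Finset (Fin n)) :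
    ∃ σ : Equiv.Perm (Fin n), ∀ i, (σ i : ℕ) < #S ↔ i ∈ S := by
  have hcard : Fintype.card {i // i ∈ S} = Fintype.card {i : Fin n // (i : ℕ) < #S} := by
    rw [Fintype.card_coe, Fintype.card_subtype, Fin.card_filter_val_lt,
      min_eq_right (card_finset_fin_le S)]
  let e := Fintype.equivOfCardEq hcard
  exact ⟨e.extendSubtype, fun i =>
    ⟨fun h => by_contra fun hi => e.extendSubtype_not_mem i hi h, e.extendSubtype_mem i⟩⟩

section FracR

lemma coe_fracR (x : UnitAddCircle) : ((fracR x : ℝ) : UnitAddCircle) = x :=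
  AddCircle.coe_equivIco

lemma fracR_coe (t : ℝ) : fracR t = Int.fract t := by
  simp [fracR, AddCircle.coe_equivIco_mk_apply]

lemma fracR_coe_eq_self {t : ℝ} (h0 : 0 ≤ t) (h1 : t < 1) : fracR t = t := by
  rw [fracR_coe, Int.fract_eq_self.2 ⟨h0, h1⟩]

lemma fracR_coe_le {t : ℝ} (h : 0 ≤ t) : fracR t ≤ t := by
  rw [fracR_coe, Int.fract]
  exact sub_le_self _ (Int.cast_nonneg (Int.floor_nonneg.2 h))

lemma fracR_nonneg (x : UnitAddCircle) : 0 ≤ fracR x := by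
  rw [← coe_fracR x, fracR_coe]
  exact Int.fract_nonneg _

lemma fracR_lt_one (x : UnitAddCircle) : fracR x < 1 := by
  rw [← coe_fracR x, fracR_coe]
  exact Int.fract_lt_one _

@[simp] lemma fracR_zero : fracR 0 = 0 := by
  simpa using fracR_coe 0

lemma fracR_nsmul_add_nsmul_le (a b : ℕ) (x y : UnitAddCircle) :
    fracR (a • x + b • y) ≤ a * fracR x + b * fracR y := by
  have hcoe : a • x + b • y = ((a * fracR x + b * fracR y : ℝ) : UnitAddCircle) := by
    rw [AddCircle.coe_add, ← nsmul_eq_mul, ← nsmul_eq_mul, AddCircle.coe_nsmul,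
      AddCircle.coe_nsmul, coe_fracR, coe_fracR]
  rw [hcoe]
  have hx := fracR_nonneg x
  have hy := fracR_nonneg y
  exact fracR_coe_le (by positivity)

lemma eq_zero_or_eq_one_div_of_mul_fracR_lt_two {n : ℕ} (hn : 0 < n) {x : UnitAddCircle}
    (hx : n • x = 0) (h : n * fracR x < 2) : x = 0 ∨ x = ((1 / n : ℝ) : UnitAddCircle) := by
  obtain ⟨m, hm, rfl⟩ := (AddCircle.nsmul_eq_zero_iff hn).1 hx
  have hlt : (m / n : ℝ) < 1 := by rw [div_lt_one (by positivity)]; exact_mod_cast hm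
  rw [mul_one, fracR_coe_eq_self (by positivity) hlt, mul_div_cancel₀ _ (by positivity)] at h
  have hm2 : m < 2 := mod_cast h
  interval_cases m <;> simp

lemma addOrderOf_one_div {n : ℕ} (hn : 0 < n) :
    addOrderOf ((1 / n : ℝ) : UnitAddCircle) = n :=
  AddCircle.addOrderOf_period_div hn

lemma nsmul_one_div_mul {m r : ℕ} (hr : r ≠ 0) :
    r • ((1 / (m * r) : ℝ) : UnitAddCircle) = ((1 / m : ℝ) : UnitAddCircle) := by
  rw [← AddCircle.coe_nsmul, nsmul_eq_mul]
  congr 1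
  field_simp

lemma nsmul_one_div {n : ℕ} (hn : 0 < n) : n • ((1 / n : ℝ) : UnitAddCircle) = 0 := by
  simpa only [addOrderOf_one_div hn] using addOrderOf_nsmul_eq_zero ((1 / n : ℝ) : UnitAddCircle)

lemma one_div_ne_zero_of_one_lt {n : ℕ} (hn : 1 < n) : ((1 / n : ℝ) : UnitAddCircle) ≠ 0 := by
  intro h
  have := addOrderOf_one_div (zero_lt_one.trans hn)
  rw [h, addOrderOf_zero] at this
  exact hn.ne this

end FracR

section Height

variable {ι : Type*} [Fintype ι]

@[simp] lemma ht_zero : ht (0 : ι → UnitAddCircle) = 0 := by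
  simp [ht]

lemma ht_nsmul_add_nsmul_le (a b : ℕ) (x y : ι → UnitAddCircle) :
    ht (a • x + b • y) ≤ a * ht x + b * ht y := by
  simp only [ht, mul_sum, ← sum_add_distrib]
  exact sum_le_sum fun i _ => fracR_nsmul_add_nsmul_le a b (x i) (y i)

lemma mul_fracR_add_mul_fracR_lt_one_of_ht_eq {a b : ℕ} {x y : ι → UnitAddCircle}
    (h : ht (a • x + b • y) = a * ht x + b * ht y) (i : ι) :
    a * fracR (x i) + b * fracR (y i) < 1 := by
  simp only [ht, mul_sum, ← sum_add_distrib] at h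
  rw [← (sum_eq_sum_iff_of_le fun i _ => fracR_nsmul_add_nsmul_le a b (x i) (y i)).1 h i
    (mem_univ i)]
  exact fracR_lt_one _

lemma ht_ite_mem [DecidableEq ι] (S : Finset ι) {t u : ℝ} (ht0 : 0 ≤ t) (ht1 : t < 1)
    (hu0 : 0 ≤ u) (hu1 : u < 1) :
    ht (fun i => if i ∈ S then (t : UnitAddCircle) else (u : UnitAddCircle)) =
      #S * t + #Sᶜ * u := by
  simp only [ht, apply_ite fracR, fracR_coe_eq_self ht0 ht1, fracR_coe_eq_self hu0 hu1, sum_ite,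
    sum_const, nsmul_eq_mul, filter_mem_eq_inter, univ_inter, filter_notMem_eq_sdiff,
    ← compl_eq_univ_sdiff]

end Height

namespace HasDeltaPoly

variable {ι : Type*} [Fintype ι] {v s : ℕ} {Λ : AddSubgroup (ι → UnitAddCircle)}

section Group

variable (hΛ : HasDeltaPoly v s (Λ : Set (ι → UnitAddCircle)))
include hΛ

lemma exists_ht_eq {j : ℕ} (hj : j < v) : ∃ x : Λ, ht x.1 = j * s := by
  obtain ⟨x, hx, h⟩ := hΛ.surjOn ⟨j, hj, rfl⟩
  exact ⟨⟨x, hx⟩, h⟩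

lemma exists_lt_ht_eq (x : Λ) : ∃ j < v, ht x.1 = j * s :=
  hΛ.mapsTo x.2

lemma ht_injective : Function.Injective fun x : Λ => ht x.1 :=
  hΛ.injOn.injective

lemma natCard_eq (hs : 0 < s) : Nat.card Λ = v := by
  have himage : {t : ℝ | ∃ j : ℕ, j < v ∧ t = j * s} =
      (fun j : ℕ => (j * s : ℝ)) '' (range v : Set ℕ) := by
    ext t
    simp [eq_comm]
  have hinj : Function.Injective fun j : ℕ => (j * s : ℝ) := fun a b h => by
    simpa [hs.ne'] using h
  have hcard := hΛ.injOn.ncard_image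
  rw [hΛ.image_eq, himage, Set.ncard_image_of_injective _ hinj, Set.ncard_coe_finset,
    card_range] at hcard
  exact hcard.symm

lemma finite (hs : 0 < s) : Finite Λ := by
  obtain ⟨j, hj, -⟩ := hΛ.exists_lt_ht_eq 0
  exact Nat.finite_of_card_ne_zero (hΛ.natCard_eq hs ▸ (Nat.zero_lt_of_lt hj).ne')

/-- The height of `g n` cannot be below `n * s`: those values are taken by `g 0, …, g (n - 1)`. -/
lemma ht_eq_of_le (hs : 0 < s) {N : ℕ} {g : ℕ → Λ} (hinj : Set.InjOn g (Set.Iio N))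
    (hle : ∀ n < N, ht (g n).1 ≤ n * s) : ∀ n < N, ht (g n).1 = n * s := by
  intro n
  induction n using Nat.strong_induction_on with
  | _ n ih =>
    intro hn
    obtain ⟨j, -, hj⟩ := hΛ.exists_lt_ht_eq (g n)
    have hjn : j ≤ n := by
      have h := hle n hn
      rw [hj] at h
      exact_mod_cast le_of_mul_le_mul_right h (by positivity)
    rcases hjn.lt_or_eq with hlt | rfl
    · have h := hΛ.ht_injective ((ih j hlt (hlt.trans hn)).trans hj.symm)
      exact absurd (hinj (hlt.trans hn) hn h) hlt.ne
    · exact hj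

end Group

section MinimalHeight

variable (hΛ : HasDeltaPoly v s (Λ : Set (ι → UnitAddCircle))) (hs : 0 < s)
  {x : Λ} (hx : ht x.1 = s)
include hΛ hs hx

lemma one_lt_addOrderOf : 1 < addOrderOf x := by
  have := hΛ.finite hs
  have hx0 : addOrderOf x ≠ 1 := by
    rw [Ne, AddMonoid.addOrderOf_eq_one_iff]
    rintro rfl
    rw [ZeroMemClass.coe_zero, ht_zero] at hx
    exact hs.ne (mod_cast hx)
  have := addOrderOf_pos x
  omega

lemma ht_nsmul_of_lt_addOrderOf : ∀ n < addOrderOf x, ht (n • x.1) = n * s :=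
  hΛ.ht_eq_of_le hs nsmul_injOn_Iio_addOrderOf fun n _ => by
    simpa [hx] using ht_nsmul_add_nsmul_le n 0 x.1 0

lemma apply_eq_zero_or_eq_one_div (i : ι) :
    x.1 i = 0 ∨ x.1 i = ((1 / addOrderOf x : ℝ) : UnitAddCircle) := by
  obtain ⟨m, hm⟩ : ∃ m, addOrderOf x = m + 1 :=
    Nat.exists_eq_add_one.2 (zero_lt_one.trans (hΛ.one_lt_addOrderOf hs hx))
  have hht := hΛ.ht_nsmul_of_lt_addOrderOf hs hx m (by omega)
  have hcarry : m * fracR (x.1 i) < 1 := by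
    simpa using mul_fracR_add_mul_fracR_lt_one_of_ht_eq (a := m) (b := 0) (x := x.1) (y := 0)
      (by simpa [hx] using hht) i
  refine eq_zero_or_eq_one_div_of_mul_fracR_lt_two (by omega)
    (congrFun (congrArg Subtype.val (addOrderOf_nsmul_eq_zero x)) i) ?_
  rw [hm]
  push_cast
  linarith [fracR_lt_one (x.1 i)]

lemma exists_eq_ite_mem [DecidableEq ι] : ∃ S : Finset ι, #S = addOrderOf x * s ∧
    x.1 = fun i => if i ∈ S then ((1 / addOrderOf x : ℝ) : UnitAddCircle) else 0 := by
  classical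
  have hm := hΛ.one_lt_addOrderOf hs hx
  have hxS : x.1 = fun i => if i ∈ univ.filter (x.1 · ≠ 0)
      then ((1 / addOrderOf x : ℝ) : UnitAddCircle) else ((0 : ℝ) : UnitAddCircle) := by
    ext i
    rcases hΛ.apply_eq_zero_or_eq_one_div hs hx i with h | h <;>
      simp [h, one_div_ne_zero_of_one_lt hm, -one_div]
  refine ⟨_, ?_, hxS⟩
  rw [hxS, ht_ite_mem _ (by positivity) (by rw [div_lt_one (by positivity)]; exact_mod_cast hm)
    le_rfl one_pos] at hx
  field_simp at hx
  rw [mul_zero, add_zero] at hx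
  exact_mod_cast hx

theorem card_eq_and_eq_zmultiples_of_addOrderOf_eq
    (hnp : NonPyramidal (Λ : Set (ι → UnitAddCircle))) (hm : addOrderOf x = v) :
    Fintype.card ι = v * s ∧ Λ = zmultiples fun _ => ((1 / v : ℝ) : UnitAddCircle) := by
  classical
  have := hΛ.finite hs
  have htop : zmultiples x = ⊤ := by
    refine eq_top_of_card_eq _ ?_
    rw [Nat.card_zmultiples, hm, hΛ.natCard_eq hs]
  have hΛx := eq_zmultiples_coe_of_zmultiples_eq_top htop
  obtain ⟨S, hS, hxS⟩ := hΛ.exists_eq_ite_mem hs hx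
  obtain rfl : S = univ := eq_univ_of_forall fun i => by
    by_contra hi
    obtain ⟨z, hz, hzi⟩ := hnp i
    rw [hΛx] at hz
    obtain ⟨n, rfl⟩ := mem_zmultiples_iff.1 hz
    exact hzi (by simp [hxS, hi])
  rw [hm] at hS hxS
  exact ⟨hS, by simpa only [hxS, mem_univ, if_true] using hΛx⟩

end MinimalHeight

section TwoGenerators

variable (hΛ : HasDeltaPoly v s (Λ : Set (ι → UnitAddCircle))) (hs : 0 < s)
  {x y : Λ} {m r : ℕ} (hx : ht x.1 = s) (hy : ht y.1 = m * s)
  (hm : addOrderOf x = m) (hr : addOrderOf (y : Λ ⧸ zmultiples x) = r)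
include hΛ hs hx hy hm

lemma notMem_zmultiples_of_ht_eq : y ∉ zmultiples x := by
  classical
  have := hΛ.finite hs
  rw [mem_zmultiples_iff_mem_range_addOrderOf, mem_image]
  rintro ⟨c, hc, rfl⟩
  rw [mem_range] at hc
  have hht := (hΛ.ht_nsmul_of_lt_addOrderOf hs hx c hc).symm.trans hy
  have hs0 : (s : ℝ) ≠ 0 := by positivity
  exact (hm ▸ hc).ne (Nat.cast_injective (R := ℝ) (mul_right_cancel₀ hs0 hht))

include hr

lemma one_lt_addOrderOf_mk : 1 < r := by
  have := hΛ.finite hs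
  have hne : r ≠ 1 := by
    rw [← hr, Ne, AddMonoid.addOrderOf_eq_one_iff, QuotientAddGroup.eq_zero_iff]
    exact hΛ.notMem_zmultiples_of_ht_eq hs hx hy hm
  have := hr ▸ addOrderOf_pos (y : Λ ⧸ zmultiples x)
  omega

lemma ht_nsmul_add_nsmul {a b : ℕ} (ha : a < m) (hb : b < r) :
    ht (a • x.1 + b • y.1) = a * ht x.1 + b * ht y.1 := by
  have hlt : a + m * b < m * r := by nlinarith
  have hdigits : ∀ n : ℕ, ((n % m : ℕ) : ℝ) * s + (n / m : ℕ) * (m * s) = n * s := fun n => by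
    have : ((n % m : ℕ) : ℝ) + m * (n / m : ℕ) = n := mod_cast Nat.mod_add_div n m
    linear_combination (s : ℝ) * this
  have hinj := injOn_mod_nsmul_add_div_nsmul x y
  rw [hm, hr] at hinj
  have hht := hΛ.ht_eq_of_le hs hinj (fun n _ => by
    simpa [hx, hy, hdigits] using ht_nsmul_add_nsmul_le (n % m) (n / m) x.1 y.1) _ hlt
  rw [Nat.add_mul_mod_self_left, Nat.add_mul_div_left _ _ (Nat.zero_lt_of_lt ha),
    Nat.mod_eq_of_lt ha, Nat.div_eq_of_lt ha, zero_add] at hht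
  rw [hx, hy]
  push_cast at hht
  linear_combination hht

lemma sub_one_mul_fracR_add_lt_one (i : ι) :
    (m - 1) * fracR (x.1 i) + (r - 1) * fracR (y.1 i) < 1 := by
  have hm1 := hm ▸ hΛ.one_lt_addOrderOf hs hx
  have hr1 := hΛ.one_lt_addOrderOf_mk hs hx hy hm hr
  have h := mul_fracR_add_mul_fracR_lt_one_of_ht_eq
    (hΛ.ht_nsmul_add_nsmul hs hx hy hm hr (Nat.sub_one_lt_of_lt hm1) (Nat.sub_one_lt_of_lt hr1)) i
  rwa [Nat.cast_pred (by omega), Nat.cast_pred (by omega)] at h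

lemma apply_eq_one_div_of_apply_eq_zero (hnp : NonPyramidal (Λ : Set (ι → UnitAddCircle)))
    (htop : AddSubgroup.closure {x, y} = ⊤) {i : ι} (hi : x.1 i = 0) :
    y.1 i = ((1 / r : ℝ) : UnitAddCircle) := by
  have hr1 := hΛ.one_lt_addOrderOf_mk hs hx hy hm hr
  obtain ⟨c, hc⟩ := hr ▸ exists_zsmul_eq_addOrderOf_mk_nsmul x y
  have hry : r • y.1 i = 0 := by
    rw [← Pi.smul_apply, ← AddSubgroup.coe_nsmul, ← hc]
    simp [hi]
  have hlt : r * fracR (y.1 i) < 2 := by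
    have := hΛ.sub_one_mul_fracR_add_lt_one hs hx hy hm hr i
    rw [hi, fracR_zero] at this
    linarith [fracR_lt_one (y.1 i)]
  refine (eq_zero_or_eq_one_div_of_mul_fracR_lt_two (by omega) hry hlt).resolve_left fun hyi => ?_
  obtain ⟨z, hz, hzi⟩ := hnp i
  obtain ⟨a, b, hab⟩ := mem_closure_pair.1 (htop ▸ mem_top (⟨z, hz⟩ : Λ))
  obtain rfl : a • x.1 + b • y.1 = z := congrArg Subtype.val hab
  exact hzi (by simp [hi, hyi])

lemma apply_eq_zero_or_eq_one_div_mul {i : ι} (hi : x.1 i ≠ 0) :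
    y.1 i = 0 ∨ y.1 i = ((1 / (m * r) : ℝ) : UnitAddCircle) := by
  have hm1 : 1 < m := hm ▸ hΛ.one_lt_addOrderOf hs hx
  have hr1 := hΛ.one_lt_addOrderOf_mk hs hx hy hm hr
  obtain ⟨c, hc⟩ := hr ▸ exists_zsmul_eq_addOrderOf_mk_nsmul x y
  have hmry : (m * r) • y.1 = 0 := by
    rw [mul_nsmul', ← AddSubgroup.coe_nsmul, ← hc, ← AddSubgroup.coe_nsmul, smul_comm, ← hm,
      addOrderOf_nsmul_eq_zero, smul_zero, ZeroMemClass.coe_zero]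
  have hxi : fracR (x.1 i) = 1 / m := by
    rw [(hΛ.apply_eq_zero_or_eq_one_div hs hx i).resolve_left hi, hm]
    exact fracR_coe_eq_self (by positivity) (by rw [div_lt_one (by positivity)]; exact_mod_cast hm1)
  have hlt : m * (r - 1) * fracR (y.1 i) < 1 := by
    have := hΛ.sub_one_mul_fracR_add_lt_one hs hx hy hm hr i
    rw [hxi] at this
    field_simp at this
    linarith
  have hr2 : (2 : ℝ) ≤ r := mod_cast hr1
  have hmul : 0 ≤ m * fracR (y.1 i) * (r - 2) :=
    mul_nonneg (mul_nonneg m.cast_nonneg (fracR_nonneg _)) (by linarith)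
  have := eq_zero_or_eq_one_div_of_mul_fracR_lt_two (by positivity) (congrFun hmry i)
    (by push_cast; linarith)
  simpa using this

lemma forall_apply_eq_zero_or_forall_eq_one_div_mul :
    (∀ i, x.1 i ≠ 0 → y.1 i = 0) ∨
      ∀ i, x.1 i ≠ 0 → y.1 i = ((1 / (m * r) : ℝ) : UnitAddCircle) := by
  have hm1 := hm ▸ hΛ.one_lt_addOrderOf hs hx
  have hr1 := hΛ.one_lt_addOrderOf_mk hs hx hy hm hr
  obtain ⟨c, hc⟩ := hr ▸ exists_zsmul_eq_addOrderOf_mk_nsmul x y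
  have hcoord : ∀ i, c • x.1 i = r • y.1 i := congrFun (congrArg Subtype.val hc)
  have hxi : ∀ i, x.1 i ≠ 0 → x.1 i = ((1 / m : ℝ) : UnitAddCircle) := fun i hi =>
    hm ▸ (hΛ.apply_eq_zero_or_eq_one_div hs hx i).resolve_left hi
  by_contra! h
  obtain ⟨⟨j, hj, hyj⟩, i, hi, hyi⟩ := h
  have hyi0 := (hΛ.apply_eq_zero_or_eq_one_div_mul hs hx hy hm hr hi).resolve_right hyi
  have hyj1 := (hΛ.apply_eq_zero_or_eq_one_div_mul hs hx hy hm hr hj).resolve_left hyj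
  have hcj : c • x.1 j = 0 := by rw [hxi j hj, ← hxi i hi, hcoord, hyi0, smul_zero]
  rw [hcoord, hyj1, nsmul_one_div_mul (by omega)] at hcj
  exact one_div_ne_zero_of_one_lt hm1 hcj

lemma eq_closure_pair_of_forall_apply_eq_zero [DecidableEq ι]
    (hnp : NonPyramidal (Λ : Set (ι → UnitAddCircle)))
    (htop : AddSubgroup.closure {x, y} = ⊤) (h : ∀ i, x.1 i ≠ 0 → y.1 i = 0) :
    ∃ S : Finset ι, #S = m * s ∧ #Sᶜ = m * r * s ∧ Λ = AddSubgroup.closure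
      {fun i => if i ∈ S then ((1 / m : ℝ) : UnitAddCircle) else 0,
        fun i => if i ∈ S then 0 else ((1 / r : ℝ) : UnitAddCircle)} := by
  have hm1 : 1 < m := hm ▸ hΛ.one_lt_addOrderOf hs hx
  have hr1 := hΛ.one_lt_addOrderOf_mk hs hx hy hm hr
  obtain ⟨S, hS, hxS⟩ := hΛ.exists_eq_ite_mem hs hx
  rw [hm] at hS hxS
  have hyS : y.1 = fun i => if i ∈ S then ((0 : ℝ) : UnitAddCircle)
      else ((1 / r : ℝ) : UnitAddCircle) := by
    ext i
    split_ifs with hi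
    · exact h i (by simp [hxS, hi, one_div_ne_zero_of_one_lt hm1, -one_div])
    · exact hΛ.apply_eq_one_div_of_apply_eq_zero hs hx hy hm hr hnp htop (by simp [hxS, hi])
  refine ⟨S, hS, ?_, ?_⟩
  · rw [hyS, ht_ite_mem S le_rfl one_pos (by positivity)
      (by rw [div_lt_one (by positivity)]; exact_mod_cast hr1)] at hy
    field_simp at hy
    have hcard : (#Sᶜ : ℝ) = m * r * s := by linarith
    exact_mod_cast hcard
  · simpa [Set.image_pair, hxS, hyS] using eq_closure_coe_image_of_closure_eq_top htop

lemma nsmul_eq_of_forall_apply_eq_one_div_mul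
    (hnp : NonPyramidal (Λ : Set (ι → UnitAddCircle)))
    (htop : AddSubgroup.closure {x, y} = ⊤)
    (h : ∀ i, x.1 i ≠ 0 → y.1 i = ((1 / (m * r) : ℝ) : UnitAddCircle)) : r • y = x := by
  have hr0 := zero_lt_one.trans (hΛ.one_lt_addOrderOf_mk hs hx hy hm hr)
  ext i
  rw [AddSubgroup.coe_nsmul, Pi.smul_apply]
  by_cases hi : x.1 i = 0
  · rw [hΛ.apply_eq_one_div_of_apply_eq_zero hs hx hy hm hr hnp htop hi, nsmul_one_div hr0, hi]
  · rw [h i hi, nsmul_one_div_mul hr0.ne',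
      (hΛ.apply_eq_zero_or_eq_one_div hs hx i).resolve_left hi, hm]

lemma eq_zmultiples_of_forall_apply_eq_one_div_mul [DecidableEq ι]
    (hnp : NonPyramidal (Λ : Set (ι → UnitAddCircle)))
    (htop : AddSubgroup.closure {x, y} = ⊤)
    (h : ∀ i, x.1 i ≠ 0 → y.1 i = ((1 / (m * r) : ℝ) : UnitAddCircle)) :
    ∃ S : Finset ι, #S = (m * r - 1) * s ∧ #Sᶜ = m * s ∧ Λ = zmultiples fun i =>
      if i ∈ S then ((1 / r : ℝ) : UnitAddCircle) else ((1 / (m * r) : ℝ) : UnitAddCircle) := by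
  have hm1 : 1 < m := hm ▸ hΛ.one_lt_addOrderOf hs hx
  have hr1 := hΛ.one_lt_addOrderOf_mk hs hx hy hm hr
  obtain ⟨S, hS, hxS⟩ := hΛ.exists_eq_ite_mem hs hx
  rw [hm] at hS hxS
  have hyS : y.1 = fun i => if i ∈ Sᶜ then ((1 / r : ℝ) : UnitAddCircle)
      else ((1 / (m * r) : ℝ) : UnitAddCircle) := by
    ext i
    by_cases hi : i ∈ S
    · simpa [hi] using h i (by simp [hxS, hi, one_div_ne_zero_of_one_lt hm1, -one_div])
    · simpa [hi] using
        hΛ.apply_eq_one_div_of_apply_eq_zero hs hx hy hm hr hnp htop (by simp [hxS, hi])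
  refine ⟨Sᶜ, ?_, by rwa [compl_compl], ?_⟩
  · have hmr : (1 : ℝ) < m * r := mod_cast Nat.one_lt_mul_iff.2 ⟨by omega, by omega, .inl hm1⟩
    rw [hyS, ht_ite_mem Sᶜ (by positivity)
      (by rw [div_lt_one (by positivity)]; exact_mod_cast hr1) (by positivity)
      (by rwa [div_lt_one (by positivity)]), compl_compl, hS] at hy
    push_cast at hy
    field_simp at hy
    have hcard : (#Sᶜ : ℝ) = ((m * r - 1 : ℕ) : ℝ) * s := by
      rw [Nat.cast_pred (by exact_mod_cast zero_lt_one.trans hmr)]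
      push_cast
      linarith
    exact_mod_cast hcard
  · rw [← hyS]
    exact eq_zmultiples_coe_of_zmultiples_eq_top (zmultiples_eq_top_of_closure_pair_eq_top htop
      (hΛ.nsmul_eq_of_forall_apply_eq_one_div_mul hs hx hy hm hr hnp htop h))

theorem eq_zmultiples_or_eq_closure_pair [DecidableEq ι]
    (hnp : NonPyramidal (Λ : Set (ι → UnitAddCircle))) (hmr : m * r = v) :
    (∃ S : Finset ι, #S = (m * r - 1) * s ∧ #Sᶜ = m * s ∧ Λ = zmultiples fun i =>
      if i ∈ S then ((1 / r : ℝ) : UnitAddCircle) else ((1 / (m * r) : ℝ) : UnitAddCircle)) ∨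
    ∃ S : Finset ι, #S = m * s ∧ #Sᶜ = m * r * s ∧ Λ = AddSubgroup.closure
      {fun i => if i ∈ S then ((1 / m : ℝ) : UnitAddCircle) else 0,
        fun i => if i ∈ S then 0 else ((1 / r : ℝ) : UnitAddCircle)} := by
  have := hΛ.finite hs
  have htop : AddSubgroup.closure {x, y} = ⊤ :=
    closure_pair_eq_top_of_addOrderOf_mul_eq (by rw [hm, hr, hmr, hΛ.natCard_eq hs])
  rcases hΛ.forall_apply_eq_zero_or_forall_eq_one_div_mul hs hx hy hm hr with h | h
  · exact .inr (hΛ.eq_closure_pair_of_forall_apply_eq_zero hs hx hy hm hr hnp htop h)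
  · exact .inl (hΛ.eq_zmultiples_of_forall_apply_eq_one_div_mul hs hx hy hm hr hnp htop h)

end TwoGenerators

lemma exists_generators {p q : ℕ} (hp : p.Prime) (hq : q.Prime)
    (hΛ : HasDeltaPoly (p * q) s (Λ : Set (ι → UnitAddCircle))) (hs : 0 < s) :
    ∃ x : Λ, ht x.1 = s ∧ (addOrderOf x = p * q ∨ ∃ y : Λ, ht y.1 = addOrderOf x * s ∧
      ((addOrderOf x = p ∧ addOrderOf (y : Λ ⧸ zmultiples x) = q) ∨
        (addOrderOf x = q ∧ addOrderOf (y : Λ ⧸ zmultiples x) = p))) := by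
  have := hΛ.finite hs
  have hpq : 1 < p * q := Nat.one_lt_mul_iff.2 ⟨hp.pos, hq.pos, .inl hp.one_lt⟩
  obtain ⟨x, hx⟩ := hΛ.exists_ht_eq hpq
  rw [Nat.cast_one, one_mul] at hx
  refine ⟨x, hx, ?_⟩
  have hle : addOrderOf x ≤ p * q := hΛ.natCard_eq hs ▸ addOrderOf_le_card
  rcases hle.eq_or_lt with hm | hm
  · exact .inl hm
  obtain ⟨y, hy⟩ := hΛ.exists_ht_eq hm
  exact .inr ⟨y, hy, eq_and_eq_or_eq_and_eq_of_mul_dvd_prime_mul_prime hp hq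
    (hΛ.natCard_eq hs ▸ addOrderOf_mul_addOrderOf_mk_dvd_natCard x y)
    (hΛ.one_lt_addOrderOf hs hx).ne' (hΛ.one_lt_addOrderOf_mk hs hx hy rfl rfl).ne'⟩

end HasDeltaPoly

theorem stmt_7_general (p q k d : ℕ) (hp : p.Prime) (hq : q.Prime)
    (Λ : AddSubgroup (Fin (d + 1) → UnitAddCircle))
    (hnp : NonPyramidal (Λ : Set (Fin (d + 1) → UnitAddCircle)))
    (hΛ : HasDeltaPoly (p * q) (k + 1) (Λ : Set (Fin (d + 1) → UnitAddCircle))) :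
    (d = p * q * (k + 1) - 1 ∧
      Λ = zmultiples fun _ => ((1 / (p * q) : ℝ) : UnitAddCircle)) ∨
    ∃ m r : ℕ, ((m = p ∧ r = q) ∨ (m = q ∧ r = p)) ∧
      ((d = (m * r + m - 1) * (k + 1) - 1 ∧ ∃ σ : Equiv.Perm (Fin (d + 1)),
        Λ = zmultiples fun i => if (σ i : ℕ) < (m * r - 1) * (k + 1)
          then ((1 / r : ℝ) : UnitAddCircle) else ((1 / (m * r) : ℝ) : UnitAddCircle)) ∨
      (d = m * (r + 1) * (k + 1) - 1 ∧ ∃ σ : Equiv.Perm (Fin (d + 1)),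
        Λ = AddSubgroup.closure
          {fun i => if (σ i : ℕ) < m * (k + 1) then ((1 / m : ℝ) : UnitAddCircle) else 0,
            fun i => if (σ i : ℕ) < m * (k + 1) then 0 else ((1 / r : ℝ) : UnitAddCircle)})) := by
  obtain ⟨x, hx, hm | ⟨y, hy, hmr⟩⟩ := hΛ.exists_generators hp hq k.succ_pos
  · obtain ⟨hcard, h⟩ := hΛ.card_eq_and_eq_zmultiples_of_addOrderOf_eq k.succ_pos hx hnp hm
    rw [Fintype.card_fin] at hcard
    exact .inl ⟨by omega, mod_cast h⟩
  refine .inr ⟨_, _, hmr, ?_⟩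
  generalize hm : addOrderOf x = m at hy hmr ⊢
  generalize hr : addOrderOf (y : Λ ⧸ zmultiples x) = r at hmr ⊢
  have hv : m * r = p * q := by
    rcases hmr with ⟨rfl, rfl⟩ | ⟨rfl, rfl⟩
    exacts [rfl, mul_comm _ _]
  rcases hΛ.eq_zmultiples_or_eq_closure_pair k.succ_pos hx hy hm hr hnp hv with
    ⟨S, hS, hS', h⟩ | ⟨S, hS, hS', h⟩ <;> obtain ⟨σ, hσ⟩ := exists_perm_val_lt_card_iff S
  · have hd : (m * r + m - 1) * (k + 1) = d + 1 := by
      rw [Nat.sub_add_comm (hv ▸ mul_pos hp.pos hq.pos), add_mul, ← hS, ← hS',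
        card_add_card_compl, Fintype.card_fin]
    exact .inl ⟨by omega, σ, by simpa only [← hS, hσ] using h⟩
  · have hd : m * (r + 1) * (k + 1) = d + 1 := by
      rw [mul_add_one m, add_mul, add_comm, ← hS, ← hS', card_add_card_compl, Fintype.card_fin]
    exact .inr ⟨by omega, σ, by simpa only [← hS, hσ] using h⟩

theorem stmt_7 (p k d : ℕ) (hp : p.Prime)
    (Λ : AddSubgroup (Fin (d+1) → AddCircle (1:ℝ)))
    (hfin : (Λ : Set (Fin (d+1) → AddCircle (1:ℝ))).Finite)
    (hnp : NonPyramidal (Λ : Set (Fin (d+1) → AddCircle (1:ℝ))))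
    (hΛ : HasDeltaPoly (p^2) (k+1) (Λ : Set (Fin (d+1) → AddCircle (1:ℝ)))) :
    (d = p^2*(k+1) - 1 ∧
      Λ = AddSubgroup.zmultiples
        (fun _ : Fin (d+1) => ((1 / ((p:ℝ)^2) : ℝ) : AddCircle (1:ℝ)))) ∨
    (d = (p^2 + p - 1)*(k+1) - 1 ∧
      ∃ σ : Equiv.Perm (Fin (d+1)),
        Λ = AddSubgroup.zmultiples
          (fun i : Fin (d+1) =>
            if ((σ i : ℕ)) < (p^2 - 1)*(k+1)
            then ((1 / (p:ℝ) : ℝ) : AddCircle (1:ℝ))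
            else ((1 / ((p:ℝ)^2) : ℝ) : AddCircle (1:ℝ)))) ∨
    (d = p*(p+1)*(k+1) - 1 ∧
      ∃ σ : Equiv.Perm (Fin (d+1)),
        Λ = AddSubgroup.closure
          { (fun i : Fin (d+1) =>
              if ((σ i : ℕ)) < p*(k+1)
              then ((1 / (p:ℝ) : ℝ) : AddCircle (1:ℝ)) else 0),
            (fun i : Fin (d+1) =>
              if ((σ i : ℕ)) < p*(k+1)
              then 0 else ((1 / (p:ℝ) : ℝ) : AddCircle (1:ℝ))) }) := by
  simp only [sq] at hΛ ⊢
  rcases stmt_7_general p p k d hp hp Λ hnp hΛ with h | ⟨m, r, ⟨rfl, rfl⟩ | ⟨rfl, rfl⟩, h⟩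
  exacts [.inl h, .inr h, .inr h]
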